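/- arXiv:2105.02487 — 2 statements merged into one kernel-verified Lean document; each statement's English description precedes it below -/
import Mathlib

section
/- If (B̂_1,…,B̂_{p−1}) is a global minimizer of the group-lasso objective F and k ∈ {1,…,p−1} is such that B̂_k ≠ 0, then λ · B̂_k / ‖B̂_k‖_F = (1/n) Σ_{i=1}^n (a^Y_i − Σ_{l=1}^{p−1} B̂_l a^{X_l}_i)(a^{X_k}_i)ᵀ. -/
open Matrix Finset

/-- The Frobenius norm of a real matrix: `‖A‖_F = sqrt (trace (Aᵀ * A))`. -/
noncomputable def frobNorm {m n : ℕ} (A : Matrix (Fin m) (Fin n) ℝ) : ℝ :=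
  Real.sqrt (Matrix.trace (Aᵀ * A))

/-!
At a tuple `B` with `B k ≠ 0` the objective is differentiable in the `k`-th block: its derivative
in the direction `D` is `trace (Gᵀ * D)`, where
`G = (λ / ‖B k‖_F) • B k - c • ∑ i, r i (a^{X_k}_i)ᵀ`, `r i` is the `i`-th residual and `c / 2` the
weight of the squared loss.
At a local minimizer this vanishes for `D = G`, so `trace (Gᵀ * G) = 0` and hence `G = 0`.
-/

section TraceForm

variable {ι m n R : Type*} [Fintype m] [Fintype n] [CommSemiring R]

theorem trace_transpose_mul_self_add_smul (A D : Matrix m n R) (t : R) :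
    trace ((A + t • D)ᵀ * (A + t • D)) =
      trace (Aᵀ * A) + t * (2 * trace (Aᵀ * D)) + t ^ 2 * trace (Dᵀ * D) := by
  have hsymm : trace (Dᵀ * A) = trace (Aᵀ * D) := by
    rw [← trace_transpose, transpose_mul, transpose_transpose]
  simp only [transpose_add, transpose_smul, Matrix.add_mul, Matrix.mul_add, Matrix.smul_mul,
    Matrix.mul_smul, trace_add, trace_smul, smul_eq_mul, hsymm]
  ring

theorem trace_transpose_sum_vecMulVec_mul [Fintype ι] (u : ι → m → R) (v : ι → n → R)
    (D : Matrix m n R) :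
    trace ((∑ i, vecMulVec (u i) (v i))ᵀ * D) = ∑ i, u i ⬝ᵥ D *ᵥ v i := by
  simp only [transpose_sum, transpose_vecMulVec, Matrix.sum_mul, trace_sum, vecMulVec_mul,
    trace_vecMulVec, dotProduct_mulVec, dotProduct_comm]

end TraceForm

theorem frobNorm_pos {m n : ℕ} {A : Matrix (Fin m) (Fin n) ℝ} (hA : A ≠ 0) : 0 < frobNorm A :=
  Real.sqrt_pos.2 <| (posSemidef_conjTranspose_mul_self A).trace_nonneg.lt_of_ne'
    (trace_conjTranspose_mul_self_eq_zero_iff.not.2 hA)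

theorem hasDerivAt_frobNorm_add_smul {m n : ℕ} {A : Matrix (Fin m) (Fin n) ℝ} (hA : A ≠ 0)
    (D : Matrix (Fin m) (Fin n) ℝ) :
    HasDerivAt (fun t : ℝ => frobNorm (A + t • D)) (trace (Aᵀ * D) / frobNorm A) 0 := by
  have hsq : HasDerivAt (fun t : ℝ => trace ((A + t • D)ᵀ * (A + t • D)))
      (2 * trace (Aᵀ * D)) 0 := by
    simp only [trace_transpose_mul_self_add_smul]
    simpa using (((hasDerivAt_id (0 : ℝ)).mul_const (2 * trace (Aᵀ * D))).const_add
      (trace (Aᵀ * A))).fun_add ((hasDerivAt_pow 2 (0 : ℝ)).mul_const (trace (Dᵀ * D)))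
  have hne : trace ((A + (0 : ℝ) • D)ᵀ * (A + (0 : ℝ) • D)) ≠ 0 := by
    simpa using (Real.sqrt_pos.1 (frobNorm_pos hA)).ne'
  simpa [frobNorm, mul_div_mul_left] using hsq.sqrt hne

theorem hasDerivAt_sum_sub_smul_sq {ι m : Type*} [Fintype ι] [Fintype m] (r v : ι → m → ℝ) :
    HasDerivAt (fun t : ℝ => ∑ i, ∑ j, (r i - t • v i) j ^ 2) (-2 * ∑ i, r i ⬝ᵥ v i) 0 := by
  have hterm (i : ι) (j : m) :
      HasDerivAt (fun t : ℝ => (r i - t • v i) j ^ 2) (-2 * (r i j * v i j)) 0 := by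
    simpa [mul_assoc] using
      (((hasDerivAt_id (0 : ℝ)).mul_const (v i j)).const_sub (r i j)).fun_pow 2
  simpa only [dotProduct, Finset.mul_sum] using
    HasDerivAt.fun_sum fun i _ => HasDerivAt.fun_sum fun j _ => hterm i j

theorem sum_apply_update {κ G : Type*} {α : κ → Type*} [Fintype κ] [DecidableEq κ]
    [AddCommGroup G] (g : ∀ l, α l → G) (x : ∀ l, α l) (k : κ) (a : α k) :
    ∑ l, g l (Function.update x k a l) = ∑ l, g l (x l) + (g k a - g k (x k)) := by
  simp only [Function.apply_update g, sum_update_of_mem (mem_univ k),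
    sum_eq_add_sum_sdiff_singleton_of_mem (mem_univ k) fun l => g l (x l)]
  abel

section GroupLasso

variable {ι κ : Type*} [Fintype κ] {m : ℕ} {d : κ → ℕ}

/-- The `i`-th residual `a^Y_i - ∑ l, B_l a^{X_l}_i` of a multi-response linear model whose
coefficients are grouped into the blocks `B_l`. -/
def groupLassoResidual (aY : ι → Fin m → ℝ) (aX : ∀ l, ι → Fin (d l) → ℝ)
    (B : ∀ l, Matrix (Fin m) (Fin (d l)) ℝ) (i : ι) : Fin m → ℝ :=
  aY i - ∑ l, B l *ᵥ aX l i

/-- The group-lasso objective: the residual sum of squares with weight `c / 2`, plus `lam` times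
the sum of the Frobenius norms of the blocks. The usual normalization `1 / (2 n)` is `c = 1 / n`. -/
noncomputable def groupLassoObjective [Fintype ι] (c lam : ℝ) (aY : ι → Fin m → ℝ)
    (aX : ∀ l, ι → Fin (d l) → ℝ) (B : ∀ l, Matrix (Fin m) (Fin (d l)) ℝ) : ℝ :=
  c / 2 * ∑ i, ∑ j, groupLassoResidual aY aX B i j ^ 2 + lam * ∑ l, frobNorm (B l)

theorem groupLassoResidual_update_add [DecidableEq κ] (aY : ι → Fin m → ℝ)
    (aX : ∀ l, ι → Fin (d l) → ℝ) (B : ∀ l, Matrix (Fin m) (Fin (d l)) ℝ) (k : κ)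
    (D : Matrix (Fin m) (Fin (d k)) ℝ) (i : ι) :
    groupLassoResidual aY aX (Function.update B k (B k + D)) i =
      groupLassoResidual aY aX B i - D *ᵥ aX k i := by
  simp only [groupLassoResidual, sum_apply_update fun l C => C *ᵥ aX l i, add_mulVec]
  abel

theorem hasDerivAt_groupLassoObjective_update [Fintype ι] [DecidableEq κ] (c lam : ℝ)
    (aY : ι → Fin m → ℝ) (aX : ∀ l, ι → Fin (d l) → ℝ)
    {B : ∀ l, Matrix (Fin m) (Fin (d l)) ℝ} {k : κ} (hk : B k ≠ 0)
    (D : Matrix (Fin m) (Fin (d k)) ℝ) :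
    HasDerivAt
      (fun t : ℝ => groupLassoObjective c lam aY aX (Function.update B k (B k + t • D)))
      (trace (((lam / frobNorm (B k)) • B k -
        c • ∑ i, vecMulVec (groupLassoResidual aY aX B i) (aX k i))ᵀ * D)) 0 := by
  have hloss := (hasDerivAt_sum_sub_smul_sq (groupLassoResidual aY aX B)
    fun i => D *ᵥ aX k i).const_mul (c / 2)
  have hpenalty := (((hasDerivAt_frobNorm_add_smul hk D).sub_const
    (frobNorm (B k))).const_add (∑ l, frobNorm (B l))).const_mul lam
  simp only [groupLassoObjective, groupLassoResidual_update_add, smul_mulVec,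
    sum_apply_update fun _ => frobNorm]
  refine (hloss.fun_add hpenalty).congr_deriv ?_
  simp only [transpose_sub, transpose_smul, Matrix.sub_mul, Matrix.smul_mul, trace_sub,
    trace_smul, trace_transpose_sum_vecMulVec_mul, smul_eq_mul]
  ring

theorem groupLasso_KKT_of_nonzero_block_general [Fintype ι] {c lam : ℝ}
    {aY : ι → Fin m → ℝ} {aX : ∀ l, ι → Fin (d l) → ℝ}
    {Bhat : ∀ l, Matrix (Fin m) (Fin (d l)) ℝ}
    (hmin : IsLocalMin (groupLassoObjective c lam aY aX) Bhat) {k : κ} (hk : Bhat k ≠ 0) :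
    (lam / frobNorm (Bhat k)) • Bhat k =
      c • ∑ i, vecMulVec (groupLassoResidual aY aX Bhat i) (aX k i) := by
  classical
  set G := (lam / frobNorm (Bhat k)) • Bhat k -
    c • ∑ i, vecMulVec (groupLassoResidual aY aX Bhat i) (aX k i)
  let path (t : ℝ) := Function.update Bhat k (Bhat k + t • G)
  have hpath : Continuous path := by fun_prop
  have hpath_zero : path 0 = Bhat := by simp [path]
  have hmin_path : IsLocalMin (groupLassoObjective c lam aY aX ∘ path) 0 :=
    IsLocalMin.comp_continuous (hpath_zero.symm ▸ hmin) hpath.continuousAt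
  have htrace : trace (Gᵀ * G) = 0 :=
    hmin_path.hasDerivAt_eq_zero (hasDerivAt_groupLassoObjective_update c lam aY aX hk G)
  exact sub_eq_zero.1 (trace_conjTranspose_mul_self_eq_zero_iff.1 htrace)

end GroupLasso

/-- First-order (KKT) condition at a nonzero block of a global minimizer of the
group-lasso objective:
`λ · B̂_k / ‖B̂_k‖_F = (1/n) Σ_i (a^Y_i − Σ_l B̂_l a^{X_l}_i)(a^{X_k}_i)ᵀ`. -/
theorem groupLasso_KKT_of_nonzero_block
    (n M p : ℕ) (hn : 1 ≤ n) (hM : 1 ≤ M) (hp : 2 ≤ p)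
    (lam : ℝ) (hlam0 : 0 < lam)
    (aY : Fin n → Fin M → ℝ) (aX : Fin (p - 1) → Fin n → Fin M → ℝ)
    (F : (Fin (p - 1) → Matrix (Fin M) (Fin M) ℝ) → ℝ)
    (hF : ∀ B, F B =
      (1 / (2 * n) : ℝ) * ∑ i, ∑ j, (aY i j - ∑ k, (B k).mulVec (aX k i) j) ^ 2
        + lam * ∑ k, frobNorm (B k))
    (Bhat : Fin (p - 1) → Matrix (Fin M) (Fin M) ℝ)
    (hmin : ∀ B, F Bhat ≤ F B) :
    ∀ k : Fin (p - 1), Bhat k ≠ 0 →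
      (lam / frobNorm (Bhat k)) • Bhat k =
        (1 / n : ℝ) •
          ∑ i, Matrix.vecMulVec (aY i - ∑ l, (Bhat l).mulVec (aX l i)) (aX k i) := by
  have hF_eq : F = groupLassoObjective (1 / n) lam aY aX := by
    ext B
    simp [hF, groupLassoObjective, groupLassoResidual, div_eq_mul_inv]
  exact fun k => groupLasso_KKT_of_nonzero_block_general (hF_eq ▸ Filter.Eventually.of_forall hmin)
end

section
/- For i ∈ {1,…,n} and m ∈ {1,…,M}, define v_{im} = Σ_{k∈K} Σ_{m'=1}^∞ (b̃_{k,mm'} − b_{k,mm'})·⟨g_{ik}, φ̂_{m'}⟩ + Σ_{k∈K} Σ_{m'=M+1}^∞ b_{k,mm'}·(⟨g_{ik}, φ̂_{m'}⟩ − ⟨g_{ik}, φ_{m'}⟩) + ⟨e_i, φ̂_m − φ_m⟩ (all series converge absolutely). Then (1/n) Σ_{i=1}^n Σ_{m=1}^M v_{im}² ≤ 12·(Σ_{m=1}^∞ Γ_φ(m)²)·(Σ_{k∈K} ‖β_k‖_HS²)·(Σ_{k∈K} Γ_g(k)) + 3·Φ(M)²·(Σ_{k∈K} Γ_g(k))·(Σ_{m'=M+1}^∞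 Γ_φ(m')²) + 3·Γ_e·Σ_{m=1}^M Γ_φ(m)², where Φ(M)² = Σ_{k∈K} Σ_{m=1}^M Σ_{m'=M+1}^∞ b_{k,mm'}². -/
open MeasureTheory
open scoped RealInnerProductSpace

/-- `L²(T)` for a set `T ⊆ ℝ`, with the Lebesgue measure restricted to `T`. -/
noncomputable def muT (T : Set ℝ) : Measure ℝ := volume.restrict T

/-- The product measure on `T × T`, so that `Lp ℝ 2 (piT T)` is `L²(T×T)`. -/
noncomputable def piT (T : Set ℝ) : Measure (ℝ × ℝ) := (volume.restrict T).prod (volume.restrict T)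

/-!
The form `B(f, h) = ∬ β(s, t) f(s) h(t)` is bounded, with `‖B‖ ≤ ‖β‖_HS`, and `b_{mm'}` are its
coefficients. Writing

`B(φ̂_m, φ̂_m') - B(φ_m, φ_m') = B(φ̂_m - φ_m, φ̂_m') + B(φ_m, φ̂_m' - φ_m')`,

Bessel's inequality for a bounded functional, summed over `m'` in the first term and over `m` in the
second, bounds the sum of the squared differences by `4 ‖B‖² ∑ Γ_φ(m)²`. The score bound follows by
Cauchy–Schwarz over `(k, m')` in each of the two series, and `(x + y + z)² ≤ 3 (x² + y² + z²)`.
-/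

section RealInequalities

lemma add_add_sq_le (x y z : ℝ) : (x + y + z) ^ 2 ≤ 3 * (x ^ 2 + y ^ 2 + z ^ 2) := by
  nlinarith [sq_nonneg (x - y), sq_nonneg (y - z), sq_nonneg (x - z)]

lemma summable_abs_mul_of_summable_sq {ι : Type*} {x y : ι → ℝ}
    (hx : Summable fun i => x i ^ 2) (hy : Summable fun i => y i ^ 2) :
    Summable fun i => |x i * y i| := by
  simpa only [abs_mul] using
    Real.summable_mul_of_Lp_Lq_of_nonneg .two_two (fun i => abs_nonneg (x i))
      (fun i => abs_nonneg (y i)) (by simpa using hx) (by simpa using hy)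

lemma sq_tsum_mul_le_tsum_sq_mul_tsum_sq {ι : Type*} {x y : ι → ℝ}
    (hx : Summable fun i => x i ^ 2) (hy : Summable fun i => y i ^ 2) :
    (∑' i, x i * y i) ^ 2 ≤ (∑' i, x i ^ 2) * ∑' i, y i ^ 2 :=
  le_of_tendsto_of_tendsto' ((summable_abs_mul_of_summable_sq hx hy).of_abs.hasSum.pow 2)
    (Filter.Tendsto.mul hx.hasSum hy.hasSum) fun s => Finset.sum_mul_sq_le_sq_mul_sq s x y

lemma sum_sq_sum_tsum_mul_le {I J K : Type*} [Fintype K] (s : Finset I)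
    {a : K → I → J → ℝ} {u : K → J → ℝ} (ha : ∀ k i, Summable fun j => a k i j ^ 2)
    (hu : ∀ k, Summable fun j => u k j ^ 2) :
    ∑ i ∈ s, (∑ k, ∑' j, a k i j * u k j) ^ 2 ≤
      (∑ k, ∑ i ∈ s, ∑' j, a k i j ^ 2) * ∑ k, ∑' j, u k j ^ 2 := by
  rw [Finset.sum_comm, Finset.sum_mul]
  refine Finset.sum_le_sum fun i _ => ?_
  exact Finset.sum_sq_le_sum_mul_sum_of_sq_le_mul _ (fun _ _ => by positivity)
    (fun _ _ => by positivity) fun k _ => sq_tsum_mul_le_tsum_sq_mul_tsum_sq (ha k i) (hu k)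

end RealInequalities

section Bessel

variable {𝕜 E ι : Type*} [RCLike 𝕜] [SeminormedAddCommGroup E] [InnerProductSpace 𝕜 E]
  {v : ι → E}

lemma sum_norm_sq_apply_orthonormal_le (hv : Orthonormal 𝕜 v) (ℓ : E →L[𝕜] 𝕜) (s : Finset ι) :
    ∑ i ∈ s, ‖ℓ (v i)‖ ^ 2 ≤ ‖ℓ‖ ^ 2 := by
  set S := ∑ i ∈ s, ‖ℓ (v i)‖ ^ 2
  set y := ∑ i ∈ s, (starRingEnd 𝕜) (ℓ (v i)) • v i
  have apply_y : ℓ y = (S : 𝕜) := by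
    simp only [y, S, map_sum, map_smul, smul_eq_mul, RCLike.conj_mul]
    push_cast
    rfl
  have norm_y : ‖y‖ ^ 2 = S := by
    rw [← RCLike.ofReal_inj (K := 𝕜)]
    push_cast
    rw [← inner_self_eq_norm_sq_to_K (𝕜 := 𝕜), hv.inner_sum]
    simp only [S, RCLike.mul_conj, starRingEnd_self_apply]
    push_cast
    rfl
  have S_nonneg : 0 ≤ S := by positivity
  have S_le : S ≤ ‖ℓ‖ * ‖y‖ := by
    simpa [apply_y, abs_of_nonneg S_nonneg] using ℓ.le_opNorm y
  nlinarith [sq_nonneg (‖ℓ‖ - ‖y‖)]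

lemma summable_norm_sq_apply_orthonormal (hv : Orthonormal 𝕜 v) (ℓ : E →L[𝕜] 𝕜) :
    Summable fun i => ‖ℓ (v i)‖ ^ 2 :=
  summable_of_sum_le (fun _ => by positivity) (sum_norm_sq_apply_orthonormal_le hv ℓ)

lemma tsum_norm_sq_apply_orthonormal_le (hv : Orthonormal 𝕜 v) (ℓ : E →L[𝕜] 𝕜) :
    ∑' i, ‖ℓ (v i)‖ ^ 2 ≤ ‖ℓ‖ ^ 2 :=
  (summable_norm_sq_apply_orthonormal hv ℓ).tsum_le_of_sum_le
    (sum_norm_sq_apply_orthonormal_le hv ℓ)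

end Bessel

lemma summable_sq_apply_orthonormal {E ι : Type*} [SeminormedAddCommGroup E]
    [InnerProductSpace ℝ E] {v : ι → E} (hv : Orthonormal ℝ v) (ℓ : E →L[ℝ] ℝ) :
    Summable fun i => ℓ (v i) ^ 2 := by
  simpa using summable_norm_sq_apply_orthonormal hv ℓ

section NormedSpace

variable {E F J : Type*} [SeminormedAddCommGroup E] [NormedSpace ℝ E]
  [SeminormedAddCommGroup F] [NormedSpace ℝ F] {ψ ψ' : J → F} {Δ : J → ℝ}

lemma sq_apply_sub_apply_le (B : E →L[ℝ] F →L[ℝ] ℝ) (x x' : E) (y y' : F) :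
    (B x' y' - B x y) ^ 2 ≤ 2 * (B (x' - x) y' ^ 2 + B x (y' - y) ^ 2) := by
  have telescope : B x' y' - B x y = B (x' - x) y' + B x (y' - y) := by
    simp only [map_sub, sub_apply]
    ring
  exact telescope ▸ add_sq_le

lemma sq_clm_apply_le {ℓ : E →L[ℝ] ℝ} {x : E} {c : ℝ} (hx : ‖x‖ ≤ c) :
    ℓ x ^ 2 ≤ ‖ℓ‖ ^ 2 * c ^ 2 := by
  rw [← mul_pow, ← sq_abs]
  exact pow_le_pow_left₀ (abs_nonneg _) (ℓ.le_opNorm_of_le hx) 2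

lemma summable_sq_apply_sub (hΔ : ∀ j, ‖ψ' j - ψ j‖ ≤ Δ j) (hΔs : Summable fun j => Δ j ^ 2)
    (ℓ : F →L[ℝ] ℝ) : Summable fun j => ℓ (ψ' j - ψ j) ^ 2 :=
  .of_nonneg_of_le (fun _ => sq_nonneg _) (fun j => sq_clm_apply_le (hΔ j)) (hΔs.mul_left _)

lemma tsum_sq_apply_sub_le (hΔ : ∀ j, ‖ψ' j - ψ j‖ ≤ Δ j) (hΔs : Summable fun j => Δ j ^ 2)
    (ℓ : F →L[ℝ] ℝ) : ∑' j, ℓ (ψ' j - ψ j) ^ 2 ≤ ‖ℓ‖ ^ 2 * ∑' j, Δ j ^ 2 := by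
  rw [← tsum_mul_left]
  exact (summable_sq_apply_sub hΔ hΔs ℓ).tsum_le_tsum (fun j => sq_clm_apply_le (hΔ j))
    (hΔs.mul_left _)

end NormedSpace

section LeftPerturbation

variable {E F I J : Type*} [SeminormedAddCommGroup E] [NormedSpace ℝ E]
  [SeminormedAddCommGroup F] [InnerProductSpace ℝ F] (B : E →L[ℝ] F →L[ℝ] ℝ)
  {φ φ' : I → E} {ψ ψ' : J → F} {Γ : I → ℝ} {Δ : J → ℝ}

lemma summable_sq_apply_sub_apply (hψ' : Orthonormal ℝ ψ') (hΔ : ∀ j, ‖ψ' j - ψ j‖ ≤ Δ j)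
    (hΔs : Summable fun j => Δ j ^ 2) (x x' : E) :
    Summable fun j => (B x' (ψ' j) - B x (ψ j)) ^ 2 :=
  .of_nonneg_of_le (fun _ => sq_nonneg _) (fun _ => sq_apply_sub_apply_le B _ _ _ _)
    (((summable_sq_apply_orthonormal hψ' (B (x' - x))).add
      (summable_sq_apply_sub hΔ hΔs (B x))).mul_left 2)

lemma tsum_sq_apply_sub_apply_le (hψ' : Orthonormal ℝ ψ') (hΔ : ∀ j, ‖ψ' j - ψ j‖ ≤ Δ j)
    (hΔs : Summable fun j => Δ j ^ 2) (x x' : E) :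
    ∑' j, (B x' (ψ' j) - B x (ψ j)) ^ 2 ≤
      2 * (∑' j, B (x' - x) (ψ' j) ^ 2 + ∑' j, B x (ψ' j - ψ j) ^ 2) := by
  have left_summable := summable_sq_apply_orthonormal hψ' (B (x' - x))
  have right_summable := summable_sq_apply_sub hΔ hΔs (B x)
  rw [← left_summable.tsum_add right_summable, ← tsum_mul_left]
  exact (summable_sq_apply_sub_apply B hψ' hΔ hΔs x x').tsum_le_tsum
    (fun _ => sq_apply_sub_apply_le B _ _ _ _) ((left_summable.add right_summable).mul_left 2)

lemma sum_tsum_sq_apply_sub_left_le (hψ' : Orthonormal ℝ ψ') (hΓ : ∀ i, ‖φ' i - φ i‖ ≤ Γ i)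
    (s : Finset I) :
    ∑ i ∈ s, ∑' j, B (φ' i - φ i) (ψ' j) ^ 2 ≤ ‖B‖ ^ 2 * ∑ i ∈ s, Γ i ^ 2 := by
  rw [Finset.mul_sum]
  gcongr with i
  calc ∑' j, B (φ' i - φ i) (ψ' j) ^ 2 ≤ ‖B (φ' i - φ i)‖ ^ 2 := by
        simpa using tsum_norm_sq_apply_orthonormal_le hψ' (B (φ' i - φ i))
    _ ≤ ‖B‖ ^ 2 * Γ i ^ 2 := by
        rw [← mul_pow]
        gcongr
        exact B.le_opNorm_of_le (hΓ i)

end LeftPerturbation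

lemma sum_tsum_sq_apply_sub_right_le {E F I J : Type*} [SeminormedAddCommGroup E]
    [InnerProductSpace ℝ E] [SeminormedAddCommGroup F] [NormedSpace ℝ F]
    (B : E →L[ℝ] F →L[ℝ] ℝ) {φ : I → E} {ψ ψ' : J → F} {Δ : J → ℝ}
    (hφ : Orthonormal ℝ φ) (hΔ : ∀ j, ‖ψ' j - ψ j‖ ≤ Δ j) (hΔs : Summable fun j => Δ j ^ 2)
    (s : Finset I) :
    ∑ i ∈ s, ∑' j, B (φ i) (ψ' j - ψ j) ^ 2 ≤ ‖B‖ ^ 2 * ∑' j, Δ j ^ 2 := by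
  have summable_term (i : I) := summable_sq_apply_sub hΔ hΔs (B (φ i))
  rw [← Summable.tsum_finsetSum fun i _ => summable_term i, ← tsum_mul_left]
  refine (summable_sum fun i _ => summable_term i).tsum_le_tsum (fun j => ?_) (hΔs.mul_left _)
  calc ∑ i ∈ s, B (φ i) (ψ' j - ψ j) ^ 2 ≤ ‖B.flip (ψ' j - ψ j)‖ ^ 2 := by
        simpa using sum_norm_sq_apply_orthonormal_le hφ (B.flip (ψ' j - ψ j)) s
    _ ≤ ‖B‖ ^ 2 * Δ j ^ 2 := by
        rw [← mul_pow, ← B.opNorm_flip]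
        gcongr
        exact B.flip.le_opNorm_of_le (hΔ j)

lemma sum_tsum_sq_apply_sub_apply_le {E F I J : Type*} [SeminormedAddCommGroup E]
    [InnerProductSpace ℝ E] [SeminormedAddCommGroup F] [InnerProductSpace ℝ F]
    (B : E →L[ℝ] F →L[ℝ] ℝ) {φ φ' : I → E} {ψ ψ' : J → F} {Γ : I → ℝ} {Δ : J → ℝ}
    (hφ : Orthonormal ℝ φ) (hψ' : Orthonormal ℝ ψ') (hΓ : ∀ i, ‖φ' i - φ i‖ ≤ Γ i)
    (hΔ : ∀ j, ‖ψ' j - ψ j‖ ≤ Δ j) (hΔs : Summable fun j => Δ j ^ 2) (s : Finset I) :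
    ∑ i ∈ s, ∑' j, (B (φ' i) (ψ' j) - B (φ i) (ψ j)) ^ 2 ≤
      2 * ‖B‖ ^ 2 * (∑ i ∈ s, Γ i ^ 2 + ∑' j, Δ j ^ 2) :=
  calc ∑ i ∈ s, ∑' j, (B (φ' i) (ψ' j) - B (φ i) (ψ j)) ^ 2
      ≤ 2 * (∑ i ∈ s, ∑' j, B (φ' i - φ i) (ψ' j) ^ 2 +
          ∑ i ∈ s, ∑' j, B (φ i) (ψ' j - ψ j) ^ 2) := by
        rw [← Finset.sum_add_distrib, Finset.mul_sum]
        exact Finset.sum_le_sum fun i _ => tsum_sq_apply_sub_apply_le B hψ' hΔ hΔs _ _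
    _ ≤ 2 * (‖B‖ ^ 2 * ∑ i ∈ s, Γ i ^ 2 + ‖B‖ ^ 2 * ∑' j, Δ j ^ 2) := by
        gcongr
        · exact sum_tsum_sq_apply_sub_left_le B hψ' hΓ s
        · exact sum_tsum_sq_apply_sub_right_le B hφ hΔ hΔs s
    _ = 2 * ‖B‖ ^ 2 * (∑ i ∈ s, Γ i ^ 2 + ∑' j, Δ j ^ 2) := by ring

section Score

variable {H K : Type*} [SeminormedAddCommGroup H] [InnerProductSpace ℝ H] [Fintype K]
  (B : K → H →L[ℝ] H →L[ℝ] ℝ) {φ φhat : ℕ → H} {Γφ : ℕ → ℝ} (M : ℕ)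

section Observation

variable (g : K → H) (e : H)

/-- The part of the `m`-th perturbation score that is due to replacing the coefficients
`B k (φ m) (φ m')` by `B k (φhat m) (φhat m')`. -/
noncomputable def coefficientError (φ φhat : ℕ → H) (m : ℕ) : ℝ :=
  ∑ k, ∑' m', (B k (φhat m) (φhat m') - B k (φ m) (φ m')) * ⟪g k, φhat m'⟫

/-- The part of the `m`-th perturbation score that is due to expanding the tails of the `g k`,
from the index `M` on, in `φhat` instead of `φ`. -/
noncomputable def tailError (φ φhat : ℕ → H) (m : ℕ) : ℝ :=
  ∑ k, ∑' m', B k (φ m) (φ (m' + M)) * (⟪g k, φhat (m' + M)⟫ - ⟪g k, φ (m' + M)⟫)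

/-- The perturbation score `v_m` of one observation with regressors `g k` and residual `e`, for
bilinear forms `B k` with coefficients `b_{k,mm'} = B k (φ m) (φ m')`. -/
noncomputable def perturbationScore (φ φhat : ℕ → H) (m : ℕ) : ℝ :=
  coefficientError B g φ φhat m + tailError B M g φ φhat m + ⟪e, φhat m - φ m⟫

lemma summable_sq_apply_tail (hφ : Orthonormal ℝ φ) (ℓ : H →L[ℝ] ℝ) :
    Summable fun m => ℓ (φ (m + M)) ^ 2 :=
  summable_sq_apply_orthonormal (hφ.comp _ (add_left_injective M)) ℓ

lemma summable_sq_inner_tail_sub (hΓφ : ∀ m, ‖φhat m - φ m‖ ≤ Γφ m)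
    (hΓsum : Summable fun m => Γφ m ^ 2) (x : H) :
    Summable fun m => (⟪x, φhat (m + M)⟫ - ⟪x, φ (m + M)⟫) ^ 2 := by
  simpa only [innerSL_apply_apply, inner_sub_right] using
    summable_sq_apply_sub (fun m => hΓφ (m + M)) ((summable_nat_add_iff M).2 hΓsum) (innerSL ℝ x)

lemma sum_sq_coefficientError_le (hφ : Orthonormal ℝ φ) (hφhat : Orthonormal ℝ φhat)
    (hΓφ : ∀ m, ‖φhat m - φ m‖ ≤ Γφ m) (hΓsum : Summable fun m => Γφ m ^ 2) (s : Finset ℕ) :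
    ∑ m ∈ s, coefficientError B g φ φhat m ^ 2 ≤
      4 * (∑' m, Γφ m ^ 2) * (∑ k, ‖B k‖ ^ 2) * ∑ k, ‖g k‖ ^ 2 := by
  have regressor_le (k : K) : ∑' m, ⟪g k, φhat m⟫ ^ 2 ≤ ‖g k‖ ^ 2 := by
    simpa using tsum_norm_sq_apply_orthonormal_le hφhat (innerSL ℝ (g k))
  have coefficient_le (k : K) :
      ∑ m ∈ s, ∑' m', (B k (φhat m) (φhat m') - B k (φ m) (φ m')) ^ 2 ≤
        4 * (∑' m, Γφ m ^ 2) * ‖B k‖ ^ 2 :=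
    calc _ ≤ 2 * ‖B k‖ ^ 2 * (∑ m ∈ s, Γφ m ^ 2 + ∑' m, Γφ m ^ 2) :=
          sum_tsum_sq_apply_sub_apply_le (B k) hφ hφhat hΓφ hΓφ hΓsum s
      _ ≤ 2 * ‖B k‖ ^ 2 * (∑' m, Γφ m ^ 2 + ∑' m, Γφ m ^ 2) := by
          gcongr
          exact hΓsum.sum_le_tsum s fun _ _ => sq_nonneg _
      _ = _ := by ring
  calc _ ≤ (∑ k, ∑ m ∈ s, ∑' m', (B k (φhat m) (φhat m') - B k (φ m) (φ m')) ^ 2) *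
        ∑ k, ∑' m', ⟪g k, φhat m'⟫ ^ 2 :=
        sum_sq_sum_tsum_mul_le s
          (fun k m => summable_sq_apply_sub_apply (B k) hφhat hΓφ hΓsum (φ m) (φhat m))
          (fun k => summable_sq_apply_orthonormal hφhat (innerSL ℝ (g k)))
    _ ≤ _ := by
        rw [Finset.mul_sum _ _ (4 * _)]
        gcongr with k _ k
        · exact coefficient_le k
        · exact regressor_le k

lemma sum_sq_tailError_le (hφ : Orthonormal ℝ φ) (hΓφ : ∀ m, ‖φhat m - φ m‖ ≤ Γφ m)
    (hΓsum : Summable fun m => Γφ m ^ 2) (s : Finset ℕ) :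
    ∑ m ∈ s, tailError B M g φ φhat m ^ 2 ≤
      (∑ k, ∑ m ∈ s, ∑' m', B k (φ m) (φ (m' + M)) ^ 2) * (∑ k, ‖g k‖ ^ 2) *
        ∑' m', Γφ (m' + M) ^ 2 := by
  have regressor_le (k : K) : ∑' m, (⟪g k, φhat (m + M)⟫ - ⟪g k, φ (m + M)⟫) ^ 2 ≤
      ‖g k‖ ^ 2 * ∑' m, Γφ (m + M) ^ 2 := by
    simpa only [innerSL_apply_apply, inner_sub_right, innerSL_apply_norm] using
      tsum_sq_apply_sub_le (fun m => hΓφ (m + M)) ((summable_nat_add_iff M).2 hΓsum)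
        (innerSL ℝ (g k))
  calc _ ≤ (∑ k, ∑ m ∈ s, ∑' m', B k (φ m) (φ (m' + M)) ^ 2) *
        ∑ k, ∑' m', (⟪g k, φhat (m' + M)⟫ - ⟪g k, φ (m' + M)⟫) ^ 2 :=
        sum_sq_sum_tsum_mul_le s (fun k m => summable_sq_apply_tail M hφ (B k (φ m)))
          (fun k => summable_sq_inner_tail_sub M hΓφ hΓsum (g k))
    _ ≤ _ := by
        rw [mul_assoc, Finset.sum_mul (f := fun k => ‖g k‖ ^ 2)]
        gcongr with k
        exact regressor_le k

lemma sum_sq_inner_sub_le (hΓφ : ∀ m, ‖φhat m - φ m‖ ≤ Γφ m) (s : Finset ℕ) :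
    ∑ m ∈ s, ⟪e, φhat m - φ m⟫ ^ 2 ≤ ‖e‖ ^ 2 * ∑ m ∈ s, Γφ m ^ 2 := by
  rw [Finset.mul_sum]
  gcongr with m
  simpa using sq_clm_apply_le (ℓ := innerSL ℝ e) (hΓφ m)

lemma sum_sq_perturbationScore_le (hφ : Orthonormal ℝ φ) (hφhat : Orthonormal ℝ φhat)
    (hΓφ : ∀ m, ‖φhat m - φ m‖ ≤ Γφ m) (hΓsum : Summable fun m => Γφ m ^ 2) (s : Finset ℕ) :
    ∑ m ∈ s, perturbationScore B M g e φ φhat m ^ 2 ≤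
      12 * (∑' m, Γφ m ^ 2) * (∑ k, ‖B k‖ ^ 2) * (∑ k, ‖g k‖ ^ 2) +
        3 * (∑ k, ∑ m ∈ s, ∑' m', B k (φ m) (φ (m' + M)) ^ 2) * (∑ k, ‖g k‖ ^ 2) *
          (∑' m', Γφ (m' + M) ^ 2) +
        3 * ‖e‖ ^ 2 * ∑ m ∈ s, Γφ m ^ 2 := by
  have split_score : ∑ m ∈ s, perturbationScore B M g e φ φhat m ^ 2 ≤
      3 * (∑ m ∈ s, coefficientError B g φ φhat m ^ 2 + ∑ m ∈ s, tailError B M g φ φhat m ^ 2 +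
        ∑ m ∈ s, ⟪e, φhat m - φ m⟫ ^ 2) := by
    simp only [← Finset.sum_add_distrib, Finset.mul_sum]
    exact Finset.sum_le_sum fun m _ => add_add_sq_le _ _ _
  linarith [sum_sq_coefficientError_le B g hφ hφhat hΓφ hΓsum s,
    sum_sq_tailError_le B M g hφ hΓφ hΓsum s, sum_sq_inner_sub_le e hΓφ s]

end Observation

theorem perturbation_score_bound_general {ι : Type*} [Fintype ι] {C : K → ℝ}
    (hB : ∀ k, ‖B k‖ ≤ C k) (hφ : Orthonormal ℝ φ) (hφhat : Orthonormal ℝ φhat)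
    (hΓφ : ∀ m, ‖φhat m - φ m‖ ≤ Γφ m) (hΓsum : Summable fun m => Γφ m ^ 2)
    (g : ι → K → H) (e : ι → H) {c : ℝ} (hc : 0 ≤ c) {Γg : K → ℝ} {Γe : ℝ}
    (hg : ∀ k, c * ∑ i, ‖g i k‖ ^ 2 ≤ Γg k) (he : c * ∑ i, ‖e i‖ ^ 2 ≤ Γe)
    (s : Finset ℕ) :
    (∀ i m k, Summable fun m' =>
        |(B k (φhat m) (φhat m') - B k (φ m) (φ m')) * ⟪g i k, φhat m'⟫|) ∧
    (∀ i m k, Summable fun m' =>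
        |B k (φ m) (φ (m' + M)) * (⟪g i k, φhat (m' + M)⟫ - ⟪g i k, φ (m' + M)⟫)|) ∧
    c * ∑ i, ∑ m ∈ s, perturbationScore B M (g i) (e i) φ φhat m ^ 2 ≤
      12 * (∑' m, Γφ m ^ 2) * (∑ k, C k ^ 2) * (∑ k, Γg k) +
        3 * (∑ k, ∑ m ∈ s, ∑' m', B k (φ m) (φ (m' + M)) ^ 2) * (∑ k, Γg k) *
          (∑' m', Γφ (m' + M) ^ 2) +
        3 * Γe * ∑ m ∈ s, Γφ m ^ 2 := by
  refine ⟨fun i m k => summable_abs_mul_of_summable_sq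
      (summable_sq_apply_sub_apply (B k) hφhat hΓφ hΓsum (φ m) (φhat m))
      (summable_sq_apply_orthonormal hφhat (innerSL ℝ (g i k))),
    fun i m k => summable_abs_mul_of_summable_sq
      (summable_sq_apply_tail M hφ (B k (φ m)))
      (summable_sq_inner_tail_sub M hΓφ hΓsum (g i k)), ?_⟩
  have average_g_le : c * ∑ i, ∑ k, ‖g i k‖ ^ 2 ≤ ∑ k, Γg k := by
    rw [Finset.sum_comm, Finset.mul_sum]
    exact Finset.sum_le_sum fun k _ => hg k
  have : 0 ≤ ∑ k, Γg k := le_trans (by positivity) average_g_le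
  set S := ∑' m, Γφ m ^ 2
  set R := ∑' m', Γφ (m' + M) ^ 2
  set P := ∑ k, ∑ m ∈ s, ∑' m', B k (φ m) (φ (m' + M)) ^ 2
  set L := ∑ m ∈ s, Γφ m ^ 2
  calc _ ≤ c * ∑ i, (12 * S * (∑ k, ‖B k‖ ^ 2) * (∑ k, ‖g i k‖ ^ 2) +
          3 * P * (∑ k, ‖g i k‖ ^ 2) * R + 3 * ‖e i‖ ^ 2 * L) := by
        gcongr with i
        exact sum_sq_perturbationScore_le B M (g i) (e i) hφ hφhat hΓφ hΓsum s
    _ = 12 * S * (∑ k, ‖B k‖ ^ 2) * (c * ∑ i, ∑ k, ‖g i k‖ ^ 2) +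
          3 * P * (c * ∑ i, ∑ k, ‖g i k‖ ^ 2) * R + 3 * (c * ∑ i, ‖e i‖ ^ 2) * L := by
        simp only [Finset.sum_add_distrib, ← Finset.mul_sum, ← Finset.sum_mul]
        ring
    _ ≤ _ := by
        gcongr with k
        exact hB k

end Score

section Tensor

variable {𝕜 X Y : Type*} [RCLike 𝕜] [MeasurableSpace X] [MeasurableSpace Y]
  {μ : Measure X} {ν : Measure Y}

lemma memLp_two_fst_mul_snd {f : X → 𝕜} {h : Y → 𝕜} (hf : MemLp f 2 μ) (hh : MemLp h 2 ν) :
    MemLp (fun x : X × Y => f x.1 * h x.2) 2 (μ.prod ν) := by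
  refine (memLp_two_iff_integrable_sq_norm (hf.1.comp_fst.mul hh.1.comp_snd)).2 ?_
  simpa only [Pi.mul_apply, norm_mul, mul_pow] using
    ((memLp_two_iff_integrable_sq_norm hf.1).1 hf).mul_prod
      ((memLp_two_iff_integrable_sq_norm hh.1).1 hh)

/-- The elementary tensor `(s, t) ↦ f s * h t`, as an element of `L²(μ ⊗ ν)`. -/
noncomputable def pureTensor (f : Lp 𝕜 2 μ) (h : Lp 𝕜 2 ν) : Lp 𝕜 2 (μ.prod ν) :=
  (memLp_two_fst_mul_snd (Lp.memLp f) (Lp.memLp h)).toLp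

lemma coeFn_pureTensor (f : Lp 𝕜 2 μ) (h : Lp 𝕜 2 ν) :
    pureTensor f h =ᵐ[μ.prod ν] fun x => f x.1 * h x.2 :=
  MemLp.coeFn_toLp _

variable [SFinite μ] [SFinite ν]

lemma inner_pureTensor_pureTensor (f f' : Lp 𝕜 2 μ) (h h' : Lp 𝕜 2 ν) :
    inner 𝕜 (pureTensor f h) (pureTensor f' h') = inner 𝕜 f f' * inner 𝕜 h h' := by
  simp only [L2.inner_def]
  rw [← integral_prod_mul]
  refine integral_congr_ae ?_
  filter_upwards [coeFn_pureTensor f h, coeFn_pureTensor f' h'] with x hx hx'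
  simp only [hx, hx', RCLike.inner_apply, map_mul]
  ring

lemma norm_pureTensor (f : Lp 𝕜 2 μ) (h : Lp 𝕜 2 ν) : ‖pureTensor f h‖ = ‖f‖ * ‖h‖ := by
  rw [← sq_eq_sq₀ (norm_nonneg _) (by positivity), ← RCLike.ofReal_inj (K := 𝕜)]
  push_cast
  simp only [mul_pow, ← inner_self_eq_norm_sq_to_K, inner_pureTensor_pureTensor]

-- Bilinearity holds because each defect is orthogonal to itself, by `inner_pureTensor_pureTensor`.
lemma pureTensor_add_left (f f' : Lp 𝕜 2 μ) (h : Lp 𝕜 2 ν) :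
    pureTensor (f + f') h = pureTensor f h + pureTensor f' h := by
  rw [← sub_eq_zero, ← inner_self_eq_zero (𝕜 := 𝕜)]
  simp only [inner_sub_left, inner_sub_right, inner_add_left, inner_add_right,
    inner_pureTensor_pureTensor]
  ring

lemma pureTensor_add_right (f : Lp 𝕜 2 μ) (h h' : Lp 𝕜 2 ν) :
    pureTensor f (h + h') = pureTensor f h + pureTensor f h' := by
  rw [← sub_eq_zero, ← inner_self_eq_zero (𝕜 := 𝕜)]
  simp only [inner_sub_left, inner_sub_right, inner_add_left, inner_add_right,
    inner_pureTensor_pureTensor]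
  ring

lemma pureTensor_smul_left (c : 𝕜) (f : Lp 𝕜 2 μ) (h : Lp 𝕜 2 ν) :
    pureTensor (c • f) h = c • pureTensor f h := by
  rw [← sub_eq_zero, ← inner_self_eq_zero (𝕜 := 𝕜)]
  simp only [inner_sub_left, inner_sub_right, inner_smul_left, inner_smul_right,
    inner_pureTensor_pureTensor]
  ring

lemma pureTensor_smul_right (c : 𝕜) (f : Lp 𝕜 2 μ) (h : Lp 𝕜 2 ν) :
    pureTensor f (c • h) = c • pureTensor f h := by
  rw [← sub_eq_zero, ← inner_self_eq_zero (𝕜 := 𝕜)]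
  simp only [inner_sub_left, inner_sub_right, inner_smul_left, inner_smul_right,
    inner_pureTensor_pureTensor]
  ring

/-- The bounded bilinear map `(f, h) ↦ pureTensor f h`; composing it with a bounded functional on
`L²(μ ⊗ ν)` gives a bounded bilinear form. -/
noncomputable def tensorL2 : Lp 𝕜 2 μ →L[𝕜] Lp 𝕜 2 ν →L[𝕜] Lp 𝕜 2 (μ.prod ν) :=
  LinearMap.mkContinuous₂
    (LinearMap.mk₂ 𝕜 pureTensor pureTensor_add_left pureTensor_smul_left pureTensor_add_right
      pureTensor_smul_right)
    1 fun f h => by rw [LinearMap.mk₂_apply, norm_pureTensor, one_mul]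

end Tensor

section KernelForm

variable {X Y : Type*} [MeasurableSpace X] [MeasurableSpace Y]
  {μ : Measure X} {ν : Measure Y} [SFinite μ] [SFinite ν]

/-- The bilinear form `(f, h) ↦ ∬ β s t * f s * h t` with Hilbert–Schmidt kernel `β`. -/
noncomputable def kernelForm (β : Lp ℝ 2 (μ.prod ν)) : Lp ℝ 2 μ →L[ℝ] Lp ℝ 2 ν →L[ℝ] ℝ :=
  (ContinuousLinearMap.compL ℝ _ _ _ (innerSL ℝ β)).comp tensorL2

lemma kernelForm_apply_eq_inner (β : Lp ℝ 2 (μ.prod ν)) (f : Lp ℝ 2 μ) (h : Lp ℝ 2 ν) :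
    kernelForm β f h = ⟪β, pureTensor f h⟫ :=
  rfl

lemma kernelForm_apply (β : Lp ℝ 2 (μ.prod ν)) (f : Lp ℝ 2 μ) (h : Lp ℝ 2 ν) :
    kernelForm β f h = ∫ x, β x * f x.1 * h x.2 ∂(μ.prod ν) := by
  rw [kernelForm_apply_eq_inner, L2.inner_def]
  refine integral_congr_ae ?_
  filter_upwards [coeFn_pureTensor f h] with x hx
  simp only [hx, Real.inner_apply, mul_assoc]

lemma norm_kernelForm_le (β : Lp ℝ 2 (μ.prod ν)) : ‖kernelForm β‖ ≤ ‖β‖ :=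
  ContinuousLinearMap.opNorm_le_bound₂ _ (norm_nonneg _) fun f h =>
    calc ‖⟪β, pureTensor f h⟫‖ ≤ ‖β‖ * ‖pureTensor f h‖ := norm_inner_le_norm _ _
      _ = ‖β‖ * ‖f‖ * ‖h‖ := by rw [norm_pureTensor, mul_assoc]

end KernelForm

instance (T : Set ℝ) : SFinite (muT T) := inferInstanceAs (SFinite (volume.restrict T))

/-- Bound on the average squared perturbation scores
`v_{im} = Σ_{k∈K} Σ_{m'} (b̃_{k,mm'} − b_{k,mm'}) ⟨g_{ik}, φ̂_{m'}⟩
  + Σ_{k∈K} Σ_{m'>M} b_{k,mm'} (⟨g_{ik}, φ̂_{m'}⟩ − ⟨g_{ik}, φ_{m'}⟩)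
  + ⟨e_i, φ̂_m − φ_m⟩` (all series converge absolutely):
`(1/n) Σ_i Σ_{m≤M} v_{im}² ≤ 12 (Σ_m Γ_φ(m)²)(Σ_k ‖β_k‖_HS²)(Σ_k Γ_g(k))
  + 3 Φ(M)² (Σ_k Γ_g(k)) (Σ_{m'>M} Γ_φ(m')²) + 3 Γ_e Σ_{m≤M} Γ_φ(m)²`,
where `Φ(M)² = Σ_k Σ_{m≤M} Σ_{m'>M} b_{k,mm'}²`. -/
theorem perturbation_score_bound
    (T : Set ℝ) (hT : IsCompact T) (hTpos : 0 < volume T)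
    {K : Type*} [Fintype K]
    (β : K → Lp ℝ 2 (piT T))
    (φ φhat : HilbertBasis ℕ ℝ (Lp ℝ 2 (muT T)))
    (Γφ : ℕ → ℝ) (hΓφ : ∀ m, ‖φhat m - φ m‖ ≤ Γφ m)
    (hΓsum : Summable fun m => Γφ m ^ 2)
    (b btilde : K → ℕ → ℕ → ℝ)
    (hb : ∀ k m m', b k m m' = ∫ x, β k x * φ m x.1 * φ m' x.2 ∂(piT T))
    (hbt : ∀ k m m', btilde k m m' = ∫ x, β k x * φhat m x.1 * φhat m' x.2 ∂(piT T))
    (n M : ℕ) (hn : 0 < n) (hM : 0 < M)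
    (g : Fin n → K → Lp ℝ 2 (muT T)) (e : Fin n → Lp ℝ 2 (muT T))
    (Γg : K → ℝ) (Γe : ℝ)
    (hg : ∀ k, (1 / n : ℝ) * ∑ i, ‖g i k‖ ^ 2 ≤ Γg k)
    (he : (1 / n : ℝ) * ∑ i, ‖e i‖ ^ 2 ≤ Γe)
    (v : Fin n → ℕ → ℝ)
    (hv : ∀ (i : Fin n) (m : ℕ),
      v i m =
        (∑ k, ∑' m', (btilde k m m' - b k m m') * ⟪g i k, φhat m'⟫) +
          (∑ k, ∑' m' : ℕ,
            b k m (m' + M) * (⟪g i k, φhat (m' + M)⟫ - ⟪g i k, φ (m' + M)⟫)) +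
          ⟪e i, φhat m - φ m⟫) :
    (∀ (i : Fin n) (m : ℕ) (k : K),
        Summable fun m' => |(btilde k m m' - b k m m') * ⟪g i k, φhat m'⟫|) ∧
    (∀ (i : Fin n) (m : ℕ) (k : K),
        Summable fun m' : ℕ =>
          |b k m (m' + M) * (⟪g i k, φhat (m' + M)⟫ - ⟪g i k, φ (m' + M)⟫)|) ∧
    (1 / n : ℝ) * ∑ i, ∑ m ∈ Finset.range M, v i m ^ 2 ≤
      12 * (∑' m, Γφ m ^ 2) * (∑ k, ‖β k‖ ^ 2) * (∑ k, Γg k) +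
        3 * (∑ k, ∑ m ∈ Finset.range M, ∑' m' : ℕ, b k m (m' + M) ^ 2) *
          (∑ k, Γg k) * (∑' m' : ℕ, Γφ (m' + M) ^ 2) +
        3 * Γe * ∑ m ∈ Finset.range M, Γφ m ^ 2 := by
  have hb' k m m' := (hb k m m').trans (kernelForm_apply (β k) (φ m) (φ m')).symm
  have hbt' k m m' := (hbt k m m').trans (kernelForm_apply (β k) (φhat m) (φhat m')).symm
  simp only [hv, hb', hbt']
  exact perturbation_score_bound_general (fun k => kernelForm (β k)) M
    (fun k => norm_kernelForm_le (β k)) φ.orthonormal φhat.orthonormal hΓφ hΓsum g e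
    (by positivity) hg he (Finset.range M)
end
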